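/- Let X and Y be disjoint subsets of the node set V of a DAG D such that Y ⊆ de(X,D). Then O(X,Y,D) = pa(Y, D^{XY}) \ (X ∪ Y); that is, the O-set pa(cn(X,Y,D),D) \ forb(X,Y,D) equals the set of parents of Y in the forbidden projection D^{XY}, excluding the nodes of X and Y. -/

import Mathlib

/-! Framework for causal graphs: mixed graphs (directed, undirected, bi-directed edges),
paths as lists of typed steps, (possibly) directed paths, descendants, causal nodes,
forbidden sets, (definite-status) blocking, valid adjustment sets, Meek's rules,
maxPDAGs, latent/forbidden projections, d-separation. -/

namespace Causal

universe u

variable {V : Type u}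

/-- A mixed graph with directed, undirected and bi-directed edge relations. -/
structure MixedGraph (V : Type u) where
  dir : V → V → Prop
  undir : V → V → Prop
  bidir : V → V → Prop

/-- The kind of an edge as traversed along a path: forward directed (`a → b`),
backward directed (`a ← b`), undirected (`a − b`), or bi-directed (`a ↔ b`). -/
inductive EdgeKind : Type
  | fwd | bwd | und | bid
  deriving DecidableEq

/-- A step of a path: source node, kind of traversed edge, destination node. -/
abbrev Step (V : Type u) := V × EdgeKind × V

namespace Step
def src (s : Step V) : V := s.1
def kind (s : Step V) : EdgeKind := s.2.1
def dst (s : Step V) : V := s.2.2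
end Step

/-- The step `s` traverses an actual edge of `G`. Undirected and bi-directed
edge relations are used symmetrically. -/
def stepOK (G : MixedGraph V) (s : Step V) : Prop :=
  match Step.kind s with
  | EdgeKind.fwd => G.dir (Step.src s) (Step.dst s)
  | EdgeKind.bwd => G.dir (Step.dst s) (Step.src s)
  | EdgeKind.und => G.undir (Step.src s) (Step.dst s) ∨ G.undir (Step.dst s) (Step.src s)
  | EdgeKind.bid => G.bidir (Step.src s) (Step.dst s) ∨ G.bidir (Step.dst s) (Step.src s)

/-- The sequence of nodes visited by a list of steps. -/
def pathNodes : List (Step V) → List V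
  | [] => []
  | s :: rest => Step.src s :: (s :: rest).map Step.dst

/-- `p` is a path in `G`: a nonempty chain of valid steps visiting distinct nodes. -/
structure IsPath (G : MixedGraph V) (p : List (Step V)) : Prop where
  nonempty : p ≠ []
  valid : ∀ s ∈ p, stepOK G s
  chain : p.Chain' (fun s t => Step.dst s = Step.src t)
  nodup : (pathNodes p).Nodup

/-- The path starts at node `a`. -/
def startsAt (p : List (Step V)) (a : V) : Prop := (pathNodes p).head? = some a

/-- The path ends at node `b`. -/
def endsAt (p : List (Step V)) (b : V) : Prop := (pathNodes p).getLast? = some b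

/-- The non-endpoint (interior) nodes of the path. -/
def interiorNodes (p : List (Step V)) : List V := ((pathNodes p).drop 1).dropLast

/-- Consecutive pairs of steps of a path. -/
def stepPairs (p : List (Step V)) : List (Step V × Step V) := p.zip p.tail

/-- Does an edge of this kind have an arrowhead at the destination of its step? -/
def headAtDst : EdgeKind → Prop
  | EdgeKind.fwd => True | EdgeKind.bwd => False
  | EdgeKind.und => False | EdgeKind.bid => True

/-- Does an edge of this kind have an arrowhead at the source of its step? -/
def headAtSrc : EdgeKind → Prop
  | EdgeKind.fwd => False | EdgeKind.bwd => True
  | EdgeKind.und => False | EdgeKind.bid => True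

/-- `v` is a collider on the path `p`: both adjacent edges have an arrowhead at `v`. -/
def colliderAt (p : List (Step V)) (v : V) : Prop :=
  ∃ q ∈ stepPairs p, Step.dst q.1 = v ∧ headAtDst (Step.kind q.1) ∧ headAtSrc (Step.kind q.2)

/-- `v` is a non-endpoint non-collider on the path `p`. -/
def nonColliderAt (p : List (Step V)) (v : V) : Prop :=
  v ∈ interiorNodes p ∧ ¬ colliderAt p v

/-- Two nodes are adjacent if they are joined by some edge. -/
def adjacent (G : MixedGraph V) (a b : V) : Prop :=
  G.dir a b ∨ G.dir b a ∨ G.undir a b ∨ G.undir b a ∨ G.bidir a b ∨ G.bidir b a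

/-- `v` is a definite non-collider on `p`: at least one adjacent edge is directed
out of `v`, or both adjacent edges are undirected and the neighbours of `v` on `p`
are non-adjacent. -/
def defNonColliderAt (G : MixedGraph V) (p : List (Step V)) (v : V) : Prop :=
  ∃ q ∈ stepPairs p, Step.dst q.1 = v ∧
    (Step.kind q.1 = EdgeKind.bwd ∨ Step.kind q.2 = EdgeKind.fwd ∨
      (Step.kind q.1 = EdgeKind.und ∧ Step.kind q.2 = EdgeKind.und ∧
        ¬ adjacent G (Step.src q.1) (Step.dst q.2)))

/-- Every non-endpoint node of `p` is a collider or a definite non-collider. -/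
def definiteStatus (G : MixedGraph V) (p : List (Step V)) : Prop :=
  ∀ q ∈ stepPairs p,
    (headAtDst (Step.kind q.1) ∧ headAtSrc (Step.kind q.2)) ∨
    (Step.kind q.1 = EdgeKind.bwd ∨ Step.kind q.2 = EdgeKind.fwd ∨
      (Step.kind q.1 = EdgeKind.und ∧ Step.kind q.2 = EdgeKind.und ∧
        ¬ adjacent G (Step.src q.1) (Step.dst q.2)))

/-- All steps of the path traverse directed edges forwards (a causal/directed path). -/
def allFwd (p : List (Step V)) : Prop := ∀ s ∈ p, Step.kind s = EdgeKind.fwd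

/-- `p` is a directed (causal) path in `G` from `a` to `b`. -/
def directedPathFromTo (G : MixedGraph V) (p : List (Step V)) (a b : V) : Prop :=
  IsPath G p ∧ allFwd p ∧ startsAt p a ∧ endsAt p b

/-- `p` is possibly directed: every edge is undirected or traversed forwards, and
there are no indices `i < j` with a directed edge from the `j`-th to the `i`-th node. -/
def possiblyDirected (G : MixedGraph V) (p : List (Step V)) : Prop :=
  (∀ s ∈ p, Step.kind s = EdgeKind.fwd ∨ Step.kind s = EdgeKind.und) ∧
  (pathNodes p).Pairwise (fun a b => ¬ G.dir b a)

/-- `b` is a descendant of `a`: `b = a` or a directed path from `a` to `b` exists. -/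
def descendant (G : MixedGraph V) (a b : V) : Prop :=
  a = b ∨ ∃ p, directedPathFromTo G p a b

/-- The descendants of a node set. -/
def deSet (G : MixedGraph V) (A : Set V) : Set V := {b | ∃ a ∈ A, descendant G a b}

/-- `b` is a possible descendant of `a`. -/
def possDescendant (G : MixedGraph V) (a b : V) : Prop :=
  a = b ∨ ∃ p, IsPath G p ∧ possiblyDirected G p ∧ startsAt p a ∧ endsAt p b

/-- The possible descendants of a node set. -/
def possdeSet (G : MixedGraph V) (A : Set V) : Set V := {b | ∃ a ∈ A, possDescendant G a b}

/-- `p` is a proper path from `X` to `Y`: only its first node lies in `X`. -/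
def properFromTo (G : MixedGraph V) (p : List (Step V)) (X Y : Set V) : Prop :=
  IsPath G p ∧ (∃ a ∈ X, startsAt p a) ∧ (∃ b ∈ Y, endsAt p b) ∧
    ∀ v ∈ (pathNodes p).tail, v ∉ X

/-- The causal nodes: nodes on proper directed paths from `X` to `Y`, excluding `X`. -/
def cn (G : MixedGraph V) (X Y : Set V) : Set V :=
  {v | v ∉ X ∧ ∃ p, properFromTo G p X Y ∧ allFwd p ∧ v ∈ pathNodes p}

/-- The possibly causal nodes: nodes on proper possibly directed paths from `X` to `Y`,
excluding `X`. -/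
def posscn (G : MixedGraph V) (X Y : Set V) : Set V :=
  {v | v ∉ X ∧ ∃ p, properFromTo G p X Y ∧ possiblyDirected G p ∧ v ∈ pathNodes p}

/-- The forbidden set for DAG-like graphs: `de(cn(X,Y,G),G) ∪ X`. -/
def forbD (G : MixedGraph V) (X Y : Set V) : Set V := deSet G (cn G X Y) ∪ X

/-- The forbidden set for maxPDAGs: `possde(posscn(X,Y,G),G) ∪ X`. -/
def forbP (G : MixedGraph V) (X Y : Set V) : Set V := possdeSet G (posscn G X Y) ∪ X

/-- Parents of a node set (via directed edges). -/
def paSet (G : MixedGraph V) (A : Set V) : Set V := {w | ∃ a ∈ A, G.dir w a}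

/-- The O-set for DAG-like graphs: `pa(cn(X,Y,G),G) \ forb(X,Y,G)`. -/
def OsetD (G : MixedGraph V) (X Y : Set V) : Set V := paSet G (cn G X Y) \ forbD G X Y

/-- The O-set for maxPDAGs: `pa(cn(X,Y,G),G) \ forb(X,Y,G)`. -/
def OsetP (G : MixedGraph V) (X Y : Set V) : Set V := paSet G (cn G X Y) \ forbP G X Y

/-- `v` is an ancestor (via directed paths) of some node of `C`. -/
def ancestorOfSome (G : MixedGraph V) (v : V) (C : Set V) : Prop :=
  ∃ c ∈ C, descendant G v c

/-- The path `p` is blocked by `C`: it contains a non-collider in `C` or a collider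
that is not an ancestor of any node of `C`. -/
def blocked (G : MixedGraph V) (p : List (Step V)) (C : Set V) : Prop :=
  (∃ v ∈ C, nonColliderAt p v) ∨ (∃ v, colliderAt p v ∧ ¬ ancestorOfSome G v C)

/-- The definite-status path `p` is blocked by `C`: it contains a definite non-collider
in `C` or a collider that is not an ancestor of any node of `C`. -/
def blockedDef (G : MixedGraph V) (p : List (Step V)) (C : Set V) : Prop :=
  (∃ v ∈ C, defNonColliderAt G p v) ∨ (∃ v, colliderAt p v ∧ ¬ ancestorOfSome G v C)

/-- Generalised adjustment criterion for DAGs/ADMGs: `Z` is disjoint from `X ∪ Y` and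
from the forbidden set, and every proper non-causal path from `X` to `Y` is blocked. -/
def validAdjDAG (G : MixedGraph V) (X Y Z : Set V) : Prop :=
  Z ∩ (X ∪ Y) = ∅ ∧ Z ∩ forbD G X Y = ∅ ∧
  ∀ p, properFromTo G p X Y → ¬ allFwd p → blocked G p Z

/-- `G` is amenable relative to `(X,Y)`: every proper possibly directed path from `X`
to `Y` starts with a directed edge out of `X`. -/
def amenable (G : MixedGraph V) (X Y : Set V) : Prop :=
  ∀ p, properFromTo G p X Y → possiblyDirected G p →
    ∃ s rest, p = s :: rest ∧ Step.kind s = EdgeKind.fwd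

/-- Generalised adjustment criterion for maxPDAGs: `Z` is disjoint from `X ∪ Y`,
`G` is amenable relative to `(X,Y)`, `Z` avoids the forbidden set, and every proper
non-causal definite-status path from `X` to `Y` is blocked by `Z`. -/
def validAdjMax (G : MixedGraph V) (X Y Z : Set V) : Prop :=
  Z ∩ (X ∪ Y) = ∅ ∧ amenable G X Y ∧ Z ∩ forbP G X Y = ∅ ∧
  ∀ p, properFromTo G p X Y → definiteStatus G p → ¬ possiblyDirected G p →
    blockedDef G p Z

/-- A PDAG: a simple graph with only directed and undirected edges and
no directed cycles. -/
structure IsPDAG (G : MixedGraph V) : Prop where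
  no_bidir : ∀ a b, ¬ G.bidir a b
  undir_symm : ∀ a b, G.undir a b → G.undir b a
  dir_irrefl : ∀ a, ¬ G.dir a a
  undir_irrefl : ∀ a, ¬ G.undir a a
  simple_dd : ∀ a b, G.dir a b → ¬ G.dir b a
  simple_du : ∀ a b, G.dir a b → ¬ G.undir a b
  acyclic : ∀ a b, (∃ p, directedPathFromTo G p a b) → ¬ G.dir b a

/-- A DAG: a PDAG without undirected edges. -/
structure IsDAG (G : MixedGraph V) extends IsPDAG G : Prop where
  no_undir : ∀ a b, ¬ G.undir a b

/-- A maximally oriented PDAG: a PDAG closed under Meek's rules R1–R4. -/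
structure IsMaxPDAG (G : MixedGraph V) extends IsPDAG G : Prop where
  meek1 : ∀ a b c, G.dir a b → G.undir b c → ¬ adjacent G a c → G.dir b c
  meek2 : ∀ a b c, G.dir a b → G.dir b c → G.undir a c → G.dir a c
  meek3 : ∀ a b c d, G.undir a b → G.undir a c → G.undir a d → G.dir b d → G.dir c d →
      ¬ adjacent G b c → G.dir a d
  meek4 : ∀ a b c d, G.undir a b → G.dir a c → G.undir b c → G.dir c d → G.undir b d →
      G.dir b d

/-- The first edge of the path has an arrowhead at the first node. -/
def startsWithArrowIn (p : List (Step V)) : Prop :=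
  ∃ s rest, p = s :: rest ∧ headAtSrc (Step.kind s)

/-- The last edge of the path has an arrowhead at the last node. -/
def endsWithArrowIn (p : List (Step V)) : Prop :=
  ∃ s rest, p = rest ++ [s] ∧ headAtDst (Step.kind s)

/-- Projection of `G` over the node set `F`: the graph on the nodes outside `F` with
(i) a directed edge `a → b` iff `G` has a directed path from `a` to `b` with all
non-endpoint nodes in `F`; (ii) a bi-directed edge `a ↔ b` iff `G` has a path with
at least one non-endpoint node, of the form `a ← ⋯ → b`, on which every non-endpoint
node is a non-collider and lies in `F`; (iii) an undirected edge `a − b` iff `G` has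
the undirected edge `a − b`. -/
def forbProjection (G : MixedGraph V) (F : Set V) : MixedGraph V where
  dir a b := a ∉ F ∧ b ∉ F ∧
    ∃ p, directedPathFromTo G p a b ∧ ∀ v ∈ interiorNodes p, v ∈ F
  bidir a b := a ∉ F ∧ b ∉ F ∧
    ∃ p, IsPath G p ∧ startsAt p a ∧ endsAt p b ∧ interiorNodes p ≠ [] ∧
      startsWithArrowIn p ∧ endsWithArrowIn p ∧
      ∀ v ∈ interiorNodes p, v ∈ F ∧ ¬ colliderAt p v
  undir a b := a ∉ F ∧ b ∉ F ∧ G.undir a b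

/-- The forbidden projection of a DAG `D` with respect to `(X,Y)`:
the latent projection over `forb(X,Y,D) \ (X ∪ Y)`. -/
def dagProj (D : MixedGraph V) (X Y : Set V) : MixedGraph V :=
  forbProjection D (forbD D X Y \ (X ∪ Y))

/-- The forbidden projection of a maxPDAG `G` with respect to `(X,Y)`:
the projection over `forb(X,Y,G) \ (X ∪ Y)`. -/
def maxProj (G : MixedGraph V) (X Y : Set V) : MixedGraph V :=
  forbProjection G (forbP G X Y \ (X ∪ Y))

/-- `A` and `B` are d-separated given `C` in `G`: every path between a node of `A`
and a node of `B` is blocked by `C`. -/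
def dSep (G : MixedGraph V) (A B C : Set V) : Prop :=
  ∀ p a b, a ∈ A → b ∈ B → IsPath G p → startsAt p a → endsAt p b → blocked G p C

/-- A v-structure `a → b ← c` with `a`, `c` non-adjacent. -/
def vStructure (G : MixedGraph V) (a b c : V) : Prop :=
  a ≠ c ∧ G.dir a b ∧ G.dir c b ∧ ¬ adjacent G a c

/-- The DAG `D` is represented by the maxPDAG `G` (i.e. `D ∈ [G]`): `D` is a DAG
with the same adjacencies and v-structures as `G`, and every directed edge of `G`
occurs in `D` with the same orientation. -/
def represents (G D : MixedGraph V) : Prop :=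
  IsDAG D ∧ (∀ a b, adjacent G a b ↔ adjacent D a b) ∧
  (∀ a b c, vStructure G a b c ↔ vStructure D a b c) ∧
  (∀ a b, G.dir a b → D.dir a b)

/-- One step of the pruning procedure: remove from `Z` a node `z` such that `Y` is
d-separated from `z` given `{X} ∪ (Z \ {z})`. -/
def pruneStep (G : MixedGraph V) (X Y : V) (Z Z' : Set V) : Prop :=
  ∃ z ∈ Z, dSep G {Y} {z} ({X} ∪ (Z \ {z})) ∧ Z' = Z \ {z}

/-- `Z'` is a possible result of the pruning procedure started at `Z`: it is reachable
by pruning steps and no further node can be removed. -/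
def pruneResult (G : MixedGraph V) (X Y : V) (Z Z' : Set V) : Prop :=
  Relation.ReflTransGen (pruneStep G X Y) Z Z' ∧
  ∀ z ∈ Z', ¬ dSep G {Y} {z} ({X} ∪ (Z' \ {z}))

end Causal

namespace Causal

/-- The list of forward steps along a list of nodes. -/
def toSteps {V : Type*} : List V → List (Step V)
  | a :: b :: t => (a, EdgeKind.fwd, b) :: toSteps (b :: t)
  | _ => []

theorem map_dst_toSteps {V : Type*} (a : V) (t : List V) :
    (toSteps (a :: t)).map Step.dst = t := by
  induction t generalizing a with
  | nil => rfl
  | cons b t ih => simp [toSteps, ih, Step.dst]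

theorem pathNodes_toSteps {V : Type*} (a b : V) (t : List V) :
    pathNodes (toSteps (a :: b :: t)) = a :: b :: t := by
  have h := map_dst_toSteps a (b :: t)
  simp only [toSteps] at h ⊢
  simp only [pathNodes, h]
  rfl

theorem allFwd_toSteps {V : Type*} (l : List V) : allFwd (toSteps l) := by
  induction l with
  | nil => intro s hs; simp [toSteps] at hs
  | cons a t ih =>
    cases t with
    | nil => intro s hs; simp [toSteps] at hs
    | cons b t =>
      intro s hs
      simp only [toSteps, List.mem_cons] at hs
      rcases hs with rfl | hs
      · rfl
      · exact ih s hs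

theorem valid_toSteps {V : Type*} (D : MixedGraph V) (l : List V) (h : l.IsChain D.dir) :
    ∀ s ∈ toSteps l, stepOK D s := by
  induction l with
  | nil => intro s hs; simp [toSteps] at hs
  | cons a t ih =>
    cases t with
    | nil => intro s hs; simp [toSteps] at hs
    | cons b t =>
      intro s hs
      rw [List.isChain_cons_cons] at h
      simp only [toSteps, List.mem_cons] at hs
      rcases hs with rfl | hs
      · exact h.1
      · exact ih h.2 s hs

theorem chain_toSteps {V : Type*} (l : List V) :
    (toSteps l).IsChain (fun s t => Step.dst s = Step.src t) := by
  induction l with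
  | nil => simp [toSteps]
  | cons a t ih =>
    cases t with
    | nil => simp [toSteps]
    | cons b t =>
      cases t with
      | nil => simp [toSteps]
      | cons c t =>
        simp only [toSteps] at ih ⊢
        rw [List.isChain_cons_cons]
        exact ⟨rfl, ih⟩

theorem isPath_toSteps {V : Type*} (D : MixedGraph V) (a b : V) (t : List V)
    (h : (a :: b :: t).IsChain D.dir) (hn : (a :: b :: t).Nodup) :
    IsPath D (toSteps (a :: b :: t)) where
  nonempty := by simp [toSteps]
  valid := valid_toSteps D _ h
  chain := chain_toSteps _
  nodup := by rw [pathNodes_toSteps]; exact hn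

theorem nodup_of_chain {V : Type*} {D : MixedGraph V} (hD : IsDAG D) (l : List V)
    (h : l.IsChain D.dir) : l.Nodup := by
  induction l with
  | nil => simp
  | cons a t ih =>
    cases t with
    | nil => simp
    | cons c t =>
      rw [List.isChain_cons_cons] at h
      have hn := ih h.2
      rw [List.nodup_cons]
      refine ⟨fun ha => ?_, hn⟩
      obtain ⟨s, t', e⟩ := List.append_of_mem ha
      cases s with
      | nil =>
        simp only [List.nil_append, List.cons.injEq] at e
        rw [e.1] at h
        exact hD.dir_irrefl _ h.1
      | cons d s =>
        have e2 : c :: t = (d :: s ++ [a]) ++ t' := by rw [e]; simp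
        have hdc : c = d := by simp at e; exact e.1
        subst hdc
        have hc := h.2
        rw [e2] at hc hn
        have hc1 := hc.left_of_append
        have hn1 := hn.of_append_left
        refine hD.acyclic c a ?_ h.1
        cases s with
        | nil =>
          exact ⟨_, isPath_toSteps D c a [] hc1 hn1, allFwd_toSteps _,
            by rw [startsAt, pathNodes_toSteps]; rfl, by rw [endsAt, pathNodes_toSteps]; simp⟩
        | cons f s =>
          refine ⟨_, isPath_toSteps D c f (s ++ [a]) hc1 hn1, allFwd_toSteps _,
            by rw [startsAt, pathNodes_toSteps]; rfl, ?_⟩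
          rw [endsAt, pathNodes_toSteps, ← List.cons_append, ← List.cons_append]
          exact List.getLast?_concat

theorem chain_of_steps {V : Type*} (D : MixedGraph V) (p : List (Step V))
    (hv : ∀ s ∈ p, stepOK D s) (hc : p.IsChain (fun s t => Step.dst s = Step.src t))
    (hf : allFwd p) : (pathNodes p).IsChain D.dir := by
  induction p with
  | nil => simp [pathNodes]
  | cons s p ih =>
    have hs : D.dir (Step.src s) (Step.dst s) := by
      have h1 := hv s (by simp)
      have h2 := hf s (by simp)
      rw [stepOK, h2] at h1
      exact h1
    cases p with
    | nil => simpa [pathNodes] using hs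
    | cons t p =>
      rw [List.isChain_cons_cons] at hc
      have := ih (fun u hu => hv u (List.mem_cons_of_mem _ hu)) hc.2
        (fun u hu => hf u (List.mem_cons_of_mem _ hu))
      simp only [pathNodes, List.map_cons] at this ⊢
      rw [List.isChain_cons_cons]
      refine ⟨hs, ?_⟩
      rw [hc.1]
      exact this

theorem exists_path_iff {V : Type*} {D : MixedGraph V} (hD : IsDAG D) (Q : List V → Prop) :
    (∃ p, IsPath D p ∧ allFwd p ∧ Q (pathNodes p)) ↔
      ∃ a b t, (a :: b :: t).IsChain D.dir ∧ Q (a :: b :: t) := by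
  constructor
  · rintro ⟨p, hp, hf, hQ⟩
    have hc := chain_of_steps D p hp.valid hp.chain hf
    have hne := hp.nonempty
    cases p with
    | nil => exact absurd rfl hne
    | cons s p => exact ⟨_, _, _, hc, hQ⟩
  · rintro ⟨a, b, t, hc, hQ⟩
    exact ⟨_, isPath_toSteps D a b t hc (nodup_of_chain hD _ hc), allFwd_toSteps _,
      by rw [pathNodes_toSteps]; exact hQ⟩

theorem rtg_of_chain {V : Type*} {r : V → V → Prop} {a b : V} {t : List V}
    (h : (a :: t).IsChain r) (hl : (a :: t).getLast? = some b) : Relation.ReflTransGen r a b := by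
  induction t generalizing a with
  | nil => simp at hl; subst hl; exact .refl
  | cons c t ih =>
    rw [List.isChain_cons_cons] at h
    exact .head h.1 (ih h.2 (by simpa using hl))

theorem chain_of_rtg {V : Type*} {r : V → V → Prop} {a b : V}
    (h : Relation.ReflTransGen r a b) :
    ∃ t, (a :: t).IsChain r ∧ (a :: t).getLast? = some b := by
  induction h using Relation.ReflTransGen.head_induction_on with
  | refl => exact ⟨[], by simp, by simp⟩
  | head h _ ih =>
    obtain ⟨t, h1, h2⟩ := ih
    exact ⟨_ :: t, List.isChain_cons_cons.2 ⟨h, h1⟩, by simpa using h2⟩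

theorem descendant_iff {V : Type*} {D : MixedGraph V} (hD : IsDAG D) (a b : V) :
    descendant D a b ↔ Relation.ReflTransGen D.dir a b := by
  have key := exists_path_iff hD (fun l => l.head? = some a ∧ l.getLast? = some b)
  constructor
  · rintro (rfl | h)
    · exact .refl
    · obtain ⟨a', c, t, hc, h1, h2⟩ := key.1 h
      simp at h1; subst h1
      exact rtg_of_chain hc h2
  · intro h
    obtain ⟨t, h1, h2⟩ := chain_of_rtg h
    cases t with
    | nil => left; simpa using h2
    | cons c t => right; exact key.2 ⟨a, c, t, h1, rfl, h2⟩

/-- Directed edges that do not enter `X`. -/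
def avoidRel {V : Type*} (D : MixedGraph V) (X : Set V) (a b : V) : Prop := D.dir a b ∧ b ∉ X

theorem chain_avoid_iff {V : Type*} (D : MixedGraph V) (X : Set V) (a : V) (t : List V) :
    (a :: t).IsChain (avoidRel D X) ↔ (a :: t).IsChain D.dir ∧ ∀ v ∈ t, v ∉ X := by
  induction t generalizing a with
  | nil => simp
  | cons b t ih =>
    simp only [List.isChain_cons_cons, ih, avoidRel, List.mem_cons, forall_eq_or_imp]
    tauto

theorem split_chain {V : Type*} {r : V → V → Prop} {a b v : V} {t : List V}
    (h : (a :: t).IsChain r) (hl : (a :: t).getLast? = some b) (hv : v ∈ t) :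
    Relation.TransGen r a v ∧ Relation.ReflTransGen r v b := by
  induction t generalizing a with
  | nil => simp at hv
  | cons c t ih =>
    rw [List.isChain_cons_cons] at h
    have hl' : (c :: t).getLast? = some b := by simpa using hl
    rcases List.mem_cons.1 hv with rfl | hv
    · exact ⟨.single h.1, rtg_of_chain h.2 hl'⟩
    · exact ⟨.head h.1 (ih h.2 hl' hv).1, (ih h.2 hl' hv).2⟩

theorem join_chain {V : Type*} {r : V → V → Prop} {a b v : V}
    (h1 : Relation.TransGen r a v) (h2 : Relation.ReflTransGen r v b) :
    ∃ t, (a :: t).IsChain r ∧ (a :: t).getLast? = some b ∧ v ∈ t := by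
  induction h1 using Relation.TransGen.head_induction_on with
  | single h =>
    obtain ⟨t, h3, h4⟩ := chain_of_rtg h2
    exact ⟨v :: t, List.isChain_cons_cons.2 ⟨h, h3⟩, by simpa using h4, by simp⟩
  | head h _ ih =>
    obtain ⟨t, h3, h4, h5⟩ := ih
    exact ⟨_ :: t, List.isChain_cons_cons.2 ⟨h, h3⟩, by simpa using h4, by simp [h5]⟩

theorem mem_cn_iff {V : Type*} {D : MixedGraph V} (hD : IsDAG D) (X Y : Set V) (v : V) :
    v ∈ cn D X Y ↔ ∃ x ∈ X, ∃ y ∈ Y, Relation.TransGen (avoidRel D X) x v ∧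
      Relation.ReflTransGen (avoidRel D X) v y := by
  have key := exists_path_iff hD (fun l => (∃ a ∈ X, l.head? = some a) ∧
    (∃ b ∈ Y, l.getLast? = some b) ∧ (∀ v ∈ l.tail, v ∉ X) ∧ v ∈ l)
  constructor
  · rintro ⟨hvX, p, ⟨hp, h1, h2, h3⟩, hf, hv⟩
    obtain ⟨a, b, t, hc, ⟨x, hx, e⟩, ⟨y, hy, e'⟩, h3, hv⟩ := key.1 ⟨p, hp, hf, h1, h2, h3, hv⟩
    simp at e; subst e
    refine ⟨a, hx, y, hy, ?_⟩
    refine split_chain ((chain_avoid_iff D X a (b :: t)).2 ⟨hc, h3⟩) e' ?_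
    rcases List.mem_cons.1 hv with rfl | hv
    · exact absurd hx hvX
    · exact hv
  · rintro ⟨x, hx, y, hy, h1, h2⟩
    obtain ⟨t, h3, h4, h5⟩ := join_chain h1 h2
    rw [chain_avoid_iff] at h3
    cases t with
    | nil => simp at h5
    | cons b t =>
      obtain ⟨p, hp, hf, g1, g2, g3, g4⟩ := key.2 ⟨x, b, t, h3.1, ⟨x, hx, rfl⟩, ⟨y, hy, h4⟩, h3.2,
        List.mem_cons_of_mem _ h5⟩
      exact ⟨h3.2 v h5, p, ⟨hp, g1, g2, g3⟩, hf, g4⟩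

/-- Directed edges out of `F`. -/
def insideRel {V : Type*} (D : MixedGraph V) (F : Set V) (a b : V) : Prop := D.dir a b ∧ a ∈ F

theorem chain_inside_iff {V : Type*} (D : MixedGraph V) (F : Set V) (a : V) (t : List V) :
    (a :: t).IsChain (insideRel D F) ↔
      (a :: t).IsChain D.dir ∧ ∀ v ∈ (a :: t).dropLast, v ∈ F := by
  induction t generalizing a with
  | nil => simp
  | cons b t ih =>
    rw [List.isChain_cons_cons, List.isChain_cons_cons, ih, insideRel]
    simp only [List.dropLast_cons₂, List.mem_cons, forall_eq_or_imp]
    tauto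

theorem proj_dir_iff {V : Type*} {D : MixedGraph V} (hD : IsDAG D) (F : Set V) (a b : V) :
    (forbProjection D F).dir a b ↔ a ∉ F ∧ b ∉ F ∧
      ∃ c, D.dir a c ∧ Relation.ReflTransGen (insideRel D F) c b := by
  have key := exists_path_iff hD (fun l => l.head? = some a ∧ l.getLast? = some b ∧
    ∀ v ∈ (l.drop 1).dropLast, v ∈ F)
  refine and_congr_right fun _ => and_congr_right fun _ => ?_
  constructor
  · rintro ⟨p, ⟨hp, hf, h1, h2⟩, h3⟩
    obtain ⟨a', c, t, hc, e, h2, h3⟩ := key.1 ⟨p, hp, hf, h1, h2, h3⟩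
    simp at e; subst e
    rw [List.isChain_cons_cons] at hc
    exact ⟨c, hc.1, rtg_of_chain ((chain_inside_iff D F c t).2 ⟨hc.2, h3⟩) (by simpa using h2)⟩
  · rintro ⟨c, hac, h⟩
    obtain ⟨t, h1, h2⟩ := chain_of_rtg h
    rw [chain_inside_iff] at h1
    obtain ⟨p, hp, hf, g1, g2, g3⟩ := key.2 ⟨a, c, t, List.isChain_cons_cons.2 ⟨hac, h1.1⟩, rfl,
      by simpa using h2, h1.2⟩
    exact ⟨p, ⟨hp, hf, g1, g2⟩, g3⟩

theorem last_X {V : Type*} (D : MixedGraph V) (X : Set V) {x c : V} (hx : x ∈ X)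
    (h : Relation.ReflTransGen D.dir x c) :
    c ∈ X ∨ ∃ x' ∈ X, Relation.TransGen (avoidRel D X) x' c := by
  induction h with
  | refl => exact .inl hx
  | @tail b c _ hbc ih =>
    by_cases hc : c ∈ X
    · exact .inl hc
    · right
      rcases ih with hb | ⟨x', hx', h⟩
      · exact ⟨b, hb, .single ⟨hbc, hc⟩⟩
      · exact ⟨x', hx', .tail h ⟨hbc, hc⟩⟩

theorem avoid_to_dir {V : Type*} {D : MixedGraph V} {X : Set V} {a b : V}
    (h : Relation.ReflTransGen (avoidRel D X) a b) : Relation.ReflTransGen D.dir a b :=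
  Relation.ReflTransGen.mono (fun _ _ h => h.1) _ _ h

end Causal

open Causal in
/-- For disjoint node sets `X`, `Y` of a DAG `D` with `Y ⊆ de(X,D)`,
the O-set `pa(cn(X,Y,D),D) \ forb(X,Y,D)` equals the set of parents of `Y` in the
forbidden projection `D^{XY}`, excluding the nodes of `X` and `Y`. -/
theorem O_set_eq_parents_of_Y_in_forbidden_projection
    {V : Type*} [Fintype V] (D : MixedGraph V) (X Y : Set V)
    (hD : IsDAG D) (hdisj : Disjoint X Y) (hde : Y ⊆ deSet D X) :
    OsetD D X Y = paSet (dagProj D X Y) Y \ (X ∪ Y) := by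
  have hYX : ∀ y ∈ Y, y ∉ X := fun y hy hx => Set.disjoint_left.1 hdisj hx hy
  have hYcn : ∀ y ∈ Y, y ∈ cn D X Y := by
    intro y hy
    obtain ⟨x, hx, h⟩ := hde hy
    rw [descendant_iff hD] at h
    rcases last_X D X hx h with h | ⟨x', hx', h⟩
    · exact absurd h (hYX y hy)
    · exact (mem_cn_iff hD X Y y).2 ⟨x', hx', y, hy, h, .refl⟩
  have hcnforb : ∀ c ∈ cn D X Y, c ∈ forbD D X Y := fun c hc => .inl ⟨c, hc, .inl rfl⟩
  ext w
  constructor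
  · rintro ⟨⟨c, hc, hwc⟩, hw⟩
    have hwX : w ∉ X := fun h => hw (.inr h)
    have hwY : w ∉ Y := fun h => hw (hcnforb w (hYcn w h))
    have main : ∃ y ∈ Y,
        Relation.ReflTransGen (insideRel D (forbD D X Y \ (X ∪ Y))) c y := by
      obtain ⟨x, hx, y, hy, h1, h2⟩ := (mem_cn_iff hD X Y c).1 hc
      clear hwc
      induction h2 using Relation.ReflTransGen.head_induction_on with
      | refl => exact ⟨y, hy, .refl⟩
      | @head a c h h' ih =>
        by_cases ha : a ∈ Y
        · exact ⟨a, ha, .refl⟩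
        · have h1' := h1.tail h
          obtain ⟨y', hy', h3⟩ := ih ((mem_cn_iff hD X Y c).2 ⟨x, hx, y, hy, h1', h'⟩) h1'
          exact ⟨y', hy', .head ⟨h.1, hcnforb a hc, fun g => g.elim hc.1 ha⟩ h3⟩
    obtain ⟨y, hy, h⟩ := main
    refine ⟨⟨y, hy, ?_⟩, fun g => g.elim hwX hwY⟩
    exact (proj_dir_iff hD _ w y).2 ⟨fun g => hw g.1, fun g => g.2 (.inr hy), c, hwc, h⟩
  · rintro ⟨⟨y, hy, h⟩, hwXY⟩
    obtain ⟨hwF, -, c, hwc, h⟩ := (proj_dir_iff hD _ w y).1 h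
    refine ⟨⟨c, ?_, hwc⟩, fun g => hwF ⟨g, hwXY⟩⟩
    have hA : c ∉ X ∧ c ∈ forbD D X Y ∧ Relation.ReflTransGen (avoidRel D X) c y := by
      clear hwc
      induction h using Relation.ReflTransGen.head_induction_on with
      | refl => exact ⟨hYX y hy, hcnforb y (hYcn y hy), .refl⟩
      | head h _ ih =>
        exact ⟨fun g => h.2.2 (.inl g), h.2.1, .head ⟨h.1, ih.1⟩ ih.2.2⟩
    obtain ⟨hcX, hcf, hcy⟩ := hA
    rcases hcf with ⟨d, hd, hdc⟩ | hcX'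
    · rw [descendant_iff hD] at hdc
      obtain ⟨x, hx, _, _, h1, _⟩ := (mem_cn_iff hD X Y d).1 hd
      rcases last_X D X hx ((avoid_to_dir h1.to_reflTransGen).trans hdc) with h | ⟨x', hx', h⟩
      · exact absurd h hcX
      · exact (mem_cn_iff hD X Y c).2 ⟨x', hx', y, hy, h, hcy⟩
    · exact absurd hcX' hcX
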